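/- Each of Ψ₂ and Ψ₃ maps ℤ_(3)⁸ into itself. For an integer m, let C_m be the quotient of ℤ_(3)⁸ by the submodule generated by the eight vectors Ψ₃(w_j) together with the eight vectors Ψ₂(w_j) - 2^m·w_j, where w_j runs over the standard basis vectors w₁, w₇, w₁₁, w₁₃, w₁₇, w₁₉, w₂₃, w₂₉. If m is even, then C_m = 0. If m = 2k+1 is odd, then C_m is cyclic of order 3^e, where e = min(7+ν_3(k-9-3^13), 21) if k ≡ 0 (mod 9); e = 6 if k ≡ 1 (mod 3); e = min(9+ν_3(k-11), 24) if k ≡ 2 (mod 9); e = min(7+ν_3(k-6-2·3^7), 15) if k ≡ 3 or 6 (mod 9); e = min(10+ν_3(k-14), 30) if k ≡ 5 (mod 9); and e = min(9+ν_3(k-8), 18) if k ≡ 8 (mod 9). -/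

import Mathlib

/-!
Write `M = ℤ_(3)⁸`. The module `C_m` is generated by the class of `w₁`: each `w_j` is congruent
to `c_j(Ψ₂) w₁` modulo the image of `Ψ₃` for an explicit polynomial `c_j` (`gen_relation`).
Since `Ψ₂` acts on `C_m` as `2^m`, the module is `ℤ_(3)` modulo the values at `X = 2^m` of the
polynomials `p` with `p(Ψ₂) w₁ ∈ Ψ₃ M`. These are generated by six explicit polynomials
`p₁, …, p₆` of degrees `1, …, 6` and a high power of `3`.

All exponents in question are at most `30`, so it suffices to know every matrix and polynomial
modulo `3^31`, and the identities between them are finite checks on integers.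
* `CE8_upper`: if `3^e` is a combination of `p₅(2^m)` and `p₆(2^m)`, then `3^e` kills
  `C_m / 3^31 C_m`, hence, by Nakayama's lemma, `C_m` itself.
* `CE8_lower`: if `3^e` divides all the `p_n(2^m)`, then `w_j ↦ c_j(2^m)` defines a
  homomorphism from `C_m` to `ℤ/3^e` with `w₁ ↦ 1`.

Together these give `CE8_cyclic`: `C_m ≅ ℤ/3^e` as soon as the values `p_n(2^m)` generate `(3^e)`.

It remains to find the valuation of the ideal `(p_n(2^m))_n`. On a residue class `m = a + 2dn`
one has `2^m = 2^a (1 + 3dn u)` with a unit `u` (`twoPow_congr`), and the `p_n` are expanded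
around `x₀ ≡ 2^a`. Either the constant term of `p₆` dominates, and the exponent is constant
(`CE8_const`), or `d = 9`, all constant terms are divisible by `3^E`, the linear terms have
valuation at least `s + 2`, with equality for one polynomial, and a `2 × 2` determinant
condition holds; then the ideal is `(3^(s+2) n, 3^E)`, which gives `min(s + ν₃(9n), E)`
(`CE8_min`). The base points `a = 2c + 1` come from the numbers `c` in the formula for `e`.
-/

set_option synthInstance.maxHeartbeats 1000000
set_option maxHeartbeats 1000000

noncomputable section

instance : Fact (Nat.Prime 3) := ⟨by norm_num⟩

/-- The `p`-adic valuation of an integer, valued in `ℕ∞`, with `ν_p 0 = ⊤`. -/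
def nuE (p : ℕ) (x : ℤ) : ℕ∞ :=
  if x = 0 then ⊤ else (padicValInt p x : ℕ∞)

/-- The localization `ℤ_(p)` of the integers at the prime `p`, realized as the subring
of `ℚ` consisting of fractions whose denominator is prime to `p`. -/
def ZLoc (p : ℕ) [hp : Fact p.Prime] : Subring ℚ where
  carrier := {q : ℚ | ¬ (p : ℕ) ∣ q.den}
  zero_mem' := by simp [Rat.den_zero, Nat.dvd_one, hp.out.ne_one]
  one_mem' := by simp [Rat.den_one, Nat.dvd_one, hp.out.ne_one]
  add_mem' := by
    intro a b ha hb hd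
    rcases (Nat.Prime.dvd_mul hp.out).mp (hd.trans (Rat.add_den_dvd a b)) with h | h
    · exact ha h
    · exact hb h
  mul_mem' := by
    intro a b ha hb hd
    rcases (Nat.Prime.dvd_mul hp.out).mp (hd.trans (Rat.mul_den_dvd a b)) with h | h
    · exact ha h
    · exact hb h
  neg_mem' := by
    intro a ha hd
    rw [Rat.neg_den] at hd
    exact ha hd

/-- The columns of the Adams operation `Ψ_t` on the ordered basis
`(w₁, w₇, w₁₁, w₁₃, w₁₇, w₁₉, w₂₃, w₂₉)` of `PK¹(E₈; ℤ_(3))`: the `j`-th entry of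
`psiCols t` is the coordinate vector of `Ψ_t(w_j)`. -/
def psiCols (t : ℚ) : Fin 8 → Fin 8 → ℚ :=
  ![![t,
     -(730/3) * (t - t^7),
     (6560/3)*t - 2190*t^7 + (10/3)*t^11,
     918*t - (24820/27)*t^7 + (10/9)*t^11 + (4/27)*t^13,
     (1484/3)*t - (40150/81)*t^7 + (50/81)*t^11 + (4/81)*t^13 + (28/81)*t^17,
     (121/3)*t - (29200/729)*t^7 + (10/243)*t^11 - (40/729)*t^13 - (28/243)*t^17
       - (109/729)*t^19,
     -(998/3)*t + (727810/2187)*t^7 - (1030/2187)*t^11 - (104/2187)*t^13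
       - (280/2187)*t^17 - (218/2187)*t^19 + (1364/2187)*t^23,
     (8479/9)*t - (6187480/6561)*t^7 + (99320/59049)*t^11 - (316/6561)*t^13
       + (364/19683)*t^17 - (109/6561)*t^19 + (1364/19683)*t^23 - (44078/59049)*t^29],
    ![0, t^7,
     -(9 * (t^7 - t^11)),
     -(34/9)*t^7 + 3*t^11 + (7/9)*t^13,
     -(55/27)*t^7 + (5/3)*t^11 + (7/27)*t^13 + (1/9)*t^17,
     -(40/243)*t^7 + (1/9)*t^11 - (70/243)*t^13 - (1/27)*t^17 + (92/243)*t^19,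
     (997/729)*t^7 - (103/81)*t^11 - (182/729)*t^13 - (10/243)*t^17 + (184/729)*t^19
       - (14/243)*t^23,
     -(8476/2187)*t^7 + (9932/2187)*t^11 - (553/2187)*t^13 + (13/2187)*t^17
       + (92/2187)*t^19 - (14/2187)*t^23 - (994/2187)*t^29],
    ![0, 0, t^11,
     (1/3) * (t^11 - t^13),
     (5/27)*t^11 - (1/9)*t^13 - (2/27)*t^17,
     (1/81)*t^11 + (10/81)*t^13 + (2/81)*t^17 - (13/81)*t^19,
     -(103/729)*t^11 + (26/243)*t^13 + (20/729)*t^17 - (26/243)*t^19 + (83/729)*t^23,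
     (9932/19683)*t^11 + (79/729)*t^13 - (26/6561)*t^17 - (13/729)*t^19
       + (83/6561)*t^23 - (11885/19683)*t^29],
    ![0, 0, 0, t^13,
     (1/3) * (t^13 - t^17),
     -(10/27)*t^13 + (1/9)*t^17 + (7/27)*t^19,
     -(26/81)*t^13 + (10/81)*t^17 + (14/81)*t^19 + (2/81)*t^23,
     -(79/243)*t^13 - (13/729)*t^17 + (7/243)*t^19 + (2/729)*t^23 + (227/729)*t^29],
    ![0, 0, 0, 0, t^17,
     -((1/3) * (t^17 - t^19)),
     -(10/27)*t^17 + (2/9)*t^19 + (4/27)*t^23,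
     (13/243)*t^17 + (1/27)*t^19 + (4/243)*t^23 - (26/243)*t^29],
    ![0, 0, 0, 0, 0, t^19,
     (2/3) * (t^19 - t^23),
     (1/9)*t^19 - (2/27)*t^23 - (1/27)*t^29],
    ![0, 0, 0, 0, 0, 0, t^23,
     (1/9) * (t^23 - t^29)],
    ![0, 0, 0, 0, 0, 0, 0, t^29]]

/-- The Adams operation `Ψ_t` as a `ℚ`-linear endomorphism of `ℚ⁸`: the standard
basis vector `w_j` is sent to the `j`-th column `psiCols t j`. -/
def psiLin (t : ℚ) : (Fin 8 → ℚ) →ₗ[ℚ] (Fin 8 → ℚ) :=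
  Matrix.mulVecLin (Matrix.of (psiCols t)).transpose

/-- The lattice `ℤ_(3)⁸ ⊆ ℚ⁸`, the free `ℤ_(3)`-module on the standard basis. -/
def latt8 : Submodule (ZLoc 3) (Fin 8 → ℚ) :=
  Submodule.span (ZLoc 3) (Set.range fun j : Fin 8 => Pi.single j (1 : ℚ))

/-- The quotient `C_m` of `ℤ_(3)⁸` by the submodule generated by the vectors
`Ψ₃(w_j)` and `Ψ₂(w_j) - 2^m·w_j` for the eight standard basis vectors `w_j`. -/
abbrev CE8 (m : ℤ) : Type :=
  ↥latt8 ⧸ Submodule.comap latt8.subtype (Submodule.span (ZLoc 3)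
    ((Set.range fun j : Fin 8 => psiLin 3 (Pi.single j 1)) ∪
     (Set.range fun j : Fin 8 =>
       psiLin 2 (Pi.single j 1) - (2 : ℚ) ^ m • (Pi.single j 1 : Fin 8 → ℚ))))

/-! ### Arithmetic of `ℤ_(3)` -/

lemma mem_ZLoc_iff (q : ℚ) : q ∈ ZLoc 3 ↔ ‖(q : ℚ_[3])‖ ≤ 1 := by
  constructor
  · intro h
    exact Padic.norm_rat_le_one h
  · intro h
    have := (Rat.padicValuation_le_one_iff (p := 3) (x := q)).1
      ((Padic.norm_rat_le_one_iff_padicValuation_le_one 3).1 h)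
    exact this

/-- The inclusion of `ℤ_(3)` into the `3`-adic integers. -/
def toPadic : ZLoc 3 →+* ℤ_[3] where
  toFun r := ⟨((r : ℚ) : ℚ_[3]), (mem_ZLoc_iff r).1 r.2⟩
  map_zero' := Subtype.ext (by simp)
  map_one' := Subtype.ext (by simp)
  map_add' a b := Subtype.ext (Rat.cast_add (a : ℚ) b)
  map_mul' a b := Subtype.ext (Rat.cast_mul (a : ℚ) b)

lemma norm_toPadic (r : ZLoc 3) : ‖toPadic r‖ = ‖((r : ℚ) : ℚ_[3])‖ := rfl

/-- Reduction `ℤ_(3) → ℤ/3^e`. -/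
def red (e : ℕ) : ZLoc 3 →+* ZMod (3 ^ e) := (PadicInt.toZModPow e).comp toPadic

lemma pow_dvd_of_norm_le (e : ℕ) (r : ZLoc 3) (h : ‖((r : ℚ) : ℚ_[3])‖ ≤ (3 : ℝ) ^ (-e : ℤ)) :
    (3 : ZLoc 3) ^ e ∣ r := by
  have hm : (r : ℚ) / 3 ^ e ∈ ZLoc 3 := by
    rw [mem_ZLoc_iff]
    have h3 : ‖(3 : ℚ_[3])‖ = (3 : ℝ)⁻¹ := by simpa using Padic.norm_p (p := 3)
    push_cast
    rw [norm_div, norm_pow, h3]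
    rw [zpow_neg, zpow_natCast] at h
    rw [inv_pow]
    exact div_le_one_of_le₀ h (by positivity)
  refine ⟨⟨_, hm⟩, ?_⟩
  apply Subtype.ext
  change (r : ℚ) = 3 ^ e * ((r : ℚ) / 3 ^ e)
  field_simp

lemma red_eq_zero {e : ℕ} {r : ZLoc 3} (h : red e r = 0) : (3 : ZLoc 3) ^ e ∣ r := by
  have h' : toPadic r ∈ RingHom.ker (PadicInt.toZModPow (p := 3) e) := h
  rw [PadicInt.ker_toZModPow, ← PadicInt.norm_le_pow_iff_mem_span_pow] at h'
  exact pow_dvd_of_norm_le e r (by simpa [norm_toPadic] using h')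

lemma isUnit_of_norm_eq_one {r : ZLoc 3} (h1 : ‖((r : ℚ) : ℚ_[3])‖ = 1) : IsUnit r := by
  have h0 : (r : ℚ) ≠ 0 := by
    rintro h0
    simp [h0] at h1
  refine IsUnit.of_mul_eq_one ⟨(r : ℚ)⁻¹, ?_⟩ ?_
  · rw [mem_ZLoc_iff]
    push_cast
    rw [norm_inv, h1, inv_one]
  · ext
    exact mul_inv_cancel₀ h0

lemma isUnit_or_dvd (r : ZLoc 3) : IsUnit r ∨ (3 : ZLoc 3) ∣ r := by
  by_cases h : ‖toPadic r‖ < 1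
  · right
    have h' := (PadicInt.norm_lt_one_iff_dvd _).1 h
    rw [← Ideal.mem_span_singleton, ← pow_one (((3 : ℕ) : ℤ_[3])),
      ← PadicInt.norm_le_pow_iff_mem_span_pow] at h'
    simpa using pow_dvd_of_norm_le 1 r (by simpa [norm_toPadic] using h')
  · exact .inl (isUnit_of_norm_eq_one (le_antisymm ((mem_ZLoc_iff r).1 r.2) (not_lt.1 h)))

lemma not_three_dvd_intCast {g : ℤ} (hg : ¬ (3 : ℤ) ∣ g) : ¬ (3 : ZLoc 3) ∣ (g : ZLoc 3) := by
  intro h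
  have h2 := map_dvd toPadic h
  rw [map_intCast, map_ofNat] at h2
  have h3 : ‖(g : ℤ_[3])‖ < 1 := (PadicInt.norm_lt_one_iff_dvd _).2 (by exact_mod_cast h2)
  exact hg (by exact_mod_cast (PadicInt.norm_int_lt_one_iff_dvd g).1 h3)

lemma isUnit_intCast_add {g : ℤ} (hg : ¬ (3 : ℤ) ∣ g) (s : ZLoc 3) :
    IsUnit ((g : ZLoc 3) + 3 * s) := by
  refine (isUnit_or_dvd _).resolve_right fun h => not_three_dvd_intCast hg ?_
  exact (dvd_add_left (dvd_mul_right _ _)).1 h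

lemma three_mem_jacobson : (3 : ZLoc 3) ∈ Ideal.jacobson (⊥ : Ideal (ZLoc 3)) := by
  rw [Ideal.mem_jacobson_bot]
  intro y
  have := isUnit_intCast_add (g := 1) (by decide) y
  simpa [add_comm] using this

/-- Lifting the exponent for the base `4`, in a form valid for every integer exponent. -/
lemma four_zpow (n : ℤ) : ∃ u : ZLoc 3, IsUnit u ∧ (4 : ℚ) ^ n = 1 + 3 * n * u := by
  have hnat : ∀ a : ℕ, ‖(4 : ℚ_[3]) ^ a - 1‖ = ‖(3 * a : ℚ_[3])‖ := by
    intro a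
    rcases Nat.eq_zero_or_pos a with rfl | ha
    · simp
    have hne : 4 ^ a - 1 ≠ 0 := by
      have : 1 < 4 ^ a := Nat.one_lt_pow (by omega) (by norm_num)
      omega
    have hv := padicValNat.pow_sub_pow (p := 3) (x := 4) (y := 1) (by decide) (by norm_num)
      (by norm_num) (by norm_num) (n := a) (by omega)
    have e1 : ((4 : ℚ_[3]) ^ a - 1) = ((4 ^ a - 1 : ℕ) : ℚ_[3]) := by
      rw [Nat.cast_sub (Nat.one_le_pow _ _ (by norm_num))]; push_cast; rfl
    have e2 : (3 * a : ℚ_[3]) = ((3 * a : ℕ) : ℚ_[3]) := by push_cast; rfl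
    rw [e1, e2, Padic.norm_eq_zpow_neg_valuation (by exact_mod_cast hne),
      Padic.norm_eq_zpow_neg_valuation (by exact_mod_cast (by omega : 3 * a ≠ 0)),
      Padic.valuation_natCast, Padic.valuation_natCast,
      padicValNat.mul (by norm_num) (by omega)]
    rw [one_pow] at hv
    rw [hv]
  have h4 : ‖(4 : ℚ_[3])‖ = 1 := by
    have := Padic.norm_natCast_eq_one_iff (p := 3) (n := 4)
    simpa using this.2 (by norm_num)
  have hcast : ‖(4 : ℚ_[3]) ^ n - 1‖ = ‖(3 * n : ℚ_[3])‖ := by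
    obtain ⟨a, rfl | rfl⟩ := n.eq_nat_or_neg
    · simpa using hnat a
    · have : (4 : ℚ_[3]) ^ (-(a : ℤ)) - 1 = -((4 ^ a)⁻¹ * (4 ^ a - 1)) := by
        rw [zpow_neg, zpow_natCast]
        have : (4 : ℚ_[3]) ^ a ≠ 0 := pow_ne_zero _ (by norm_num)
        rw [mul_sub, inv_mul_cancel₀ this]
        ring
      rw [this, norm_neg, norm_mul, norm_inv, norm_pow, h4, hnat]
      simp
  rcases eq_or_ne n 0 with rfl | hn
  · exact ⟨1, isUnit_one, by simp⟩
  have hn0 : (n : ℚ) ≠ 0 := by exact_mod_cast hn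
  have hn3 : (3 * n : ℚ) ≠ 0 := by
    positivity
  have hN : ‖((((4 : ℚ) ^ n - 1) / (3 * n) : ℚ) : ℚ_[3])‖ = 1 := by
    push_cast
    rw [norm_div, hcast, div_self]
    rw [norm_ne_zero_iff]
    exact_mod_cast hn3
  refine ⟨⟨((4 : ℚ) ^ n - 1) / (3 * n), (mem_ZLoc_iff _).2 hN.le⟩,
    isUnit_of_norm_eq_one hN, ?_⟩
  field_simp
  ring

/-! ### Integral matrices modulo `3^31` and the identities between them -/

/-- The (integral) matrix of `Ψ₂`: row `j` holds the coordinates of `Ψ₂(w_j)`. -/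
def mPsi2 : Fin 8 → Fin 8 → ℤ :=
  ![![2, 30660, -269120, -112340, -15480, -98906, 5203388, -400295986],
    ![0, 128, 17280, 12032, 19840, 191488, -360832, -244034048],
    ![0, 0, 2048, -2048, -10240, -79872, 903168, -324075520],
    ![0, 0, 0, 8192, -40960, 147456, 311296, 167206912],
    ![0, 0, 0, 0, 131072, 131072, 1310720, -57278464],
    ![0, 0, 0, 0, 0, 524288, -5242880, -20447232],
    ![0, 0, 0, 0, 0, 0, 8388608, -58720256],
    ![0, 0, 0, 0, 0, 0, 0, 536870912]]

/-- The (integral) matrix of `Ψ₃`: row `j` holds the coordinates of `Ψ₃(w_j)`. -/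
def mPsi3 : Fin 8 → Fin 8 → ℤ :=
  ![![3, 531440, -4192480, -1574640, 43746560, -188829224, 58583907152, -51223655732024],
    ![0, 2187, 1574640, 1763208, 15053040, 434810232, -5136466128, -31193325852352],
    ![0, 0, 177147, -472392, -9710280, -183148128, 10597964832, -41439262622400],
    ![0, 0, 0, 1594323, -42515280, 315085464, 2540839104, 21370790533608],
    ![0, 0, 0, 0, 129140163, 344373768, 14157588240, -7341568311096],
    ![0, 0, 0, 0, 0, 1162261467, -61987278240, -2548710256968],
    ![0, 0, 0, 0, 0, 0, 94143178827, -7615137131784],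
    ![0, 0, 0, 0, 0, 0, 0, 68630377364883]]

/-- The polynomials `p₁, …, p₆` (row `n` is `p_{n+1}`, columns are coefficients of
`1, X, …, X⁶`), reduced modulo `3^31`. Up to a high power of `3` they generate the ideal of all
`p ∈ ℤ_(3)[X]` with `p(Ψ₂) w₁ ∈ Ψ₃(ℤ_(3)⁸)`; the leading coefficients are
`3^28, 3^23, 3^16, 3^11, 3^3, 1`. -/
def mP : Fin 6 → Fin 7 → ℤ :=
  ![![91507169819844, 22876792454961, 0, 0, 0, 0, 0],
    ![-24759656031501, -228862067728437, 94143178827, 0, 0, 0, 0],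
    ![254573013247317, -10661037016302, -227532569750352, 43046721, 0, 0, 0],
    ![201587369998788, -195127879133583, -197387922508200, 286500050539137, 177147, 0, 0],
    ![74665156822200, 89334356343768, 51060777487002, -147075042903669, 278002295905842, 27, 0],
    ![-84697216716350, -258291909240075, -228222430511514, 198501455092490, 276590039368338, -112304253869808, 1]]

/-- Row `i` is `Ψ₂^i(w₁)` modulo `3^31`. -/
def mT : Fin 7 → Fin 8 → ℤ :=
  ![![1, 0, 0, 0, 0, 0, 0, 0],
    ![2, 30660, -269120, -112340, -15480, -98906, 5203388, -400295986],
    ![4, 3985800, -21891200, -455080, 5936504080, -43083453620, 43858360280440, -198616122877424],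
    ![8, 510305040, 24040369920, 89061858480, 160757950664693, -189014776685959, -229270320609654, 6802402252838],
    ![16, 65319290400, 58052746534400, 68826660130613, -4440193391273, -146868296736602, -20822641254860, 206856625791315],
    ![32, 8360869661760, 192103357171562, -238295529183878, 204636846474433, -251618436376633, -124321298463009, 150668806697126],
    ![64, -165155474881494, -90024929357901, 296128697161233, 297948371497646, 38570736603011, 24667059898512, 126726896457744]]

/-- Row `j` is a polynomial `c_j` of degree at most `5` such that `w_j - c_j(Ψ₂) w₁` lies in
the image of `Ψ₃` modulo `3^31`. -/
def mC : Fin 8 → Fin 7 → ℤ :=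
  ![![1, 0, 0, 0, 0, 0, 0],
    ![41624572794536, 150490853282118, 132228442304775, 203179974814394, 31599464479112, -86079812643553, 0],
    ![-81284636955117, -124223590518582, -246577399142014, 105448779574548, 291461425079764, -245372150030499, 0],
    ![-91720737857756, 56145540930011, 190052065621061, 11243077218642, -249031606798281, 54403534684747, 0],
    ![282525488366443, 205357002413774, -78604577684019, -255629036986991, -273060241021822, -195538681447725, 0],
    ![-77970122346323, -209854501444070, -155557285843152, -254694273256484, -285777541688042, 198339970089357, 0],
    ![-94596961389581, -198164190160294, -248260881970799, 5703054662950, 251977509312680, 5265072305389, 0],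
    ![88521396283317, 195407996103213, 177554782299729, 225486867658341, 8032581471741, -304861244227548, 0]]

/-- The vectors whose images under `Ψ₃` are the differences `w_j - c_j(Ψ₂) w₁`
modulo `3^31`; they are combinations of `w₁` and `w₇` only. -/
def mB : Fin 8 → Fin 2 → ℤ :=
  ![![0, 0],
    ![-82665758055040, -201374838842192],
    ![190870065414654, 256474052841986],
    ![251731992780333, 40696281985766],
    ![-226242848616174, 161229510411270],
    ![49225762080099, 54857909937520],
    ![-97028148449925, -169892613378429],
    ![-259497900876357, -46721526337084]]

/-- The vectors whose images under `Ψ₃` are `p₅(Ψ₂) w₁` and `p₆(Ψ₂) w₁` modulo `3^31`. -/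
def mBP : Fin 2 → Fin 8 → ℤ :=
  ![![213548796434331, -228986018011935, 185930750152019, -217216681543530, 289175148735366, 200983262410082, -273278986302004, -298571843154811],
    ![301848463185660, -279575106275542, 264114080539234, 173909139934071, -193556727382520, -168024662649501, -249115224461268, -262369737512868]]

/-- Coefficients expressing `∑ⱼ (Ψ₂)ᵢⱼ cⱼ - X cᵢ` through `p₁, …, p₆` modulo `3^31`. -/
def mH2 : Fin 8 → Fin 6 → ℤ :=
  ![![0, 0, 0, 0, 0, 0],
    ![-3, -2941, 3925648, 1059177812, -3491589273676, 86079812643553],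
    ![2, 737, 2052242, -897283045, -1673595376251, 245372150030499],
    ![2, -2592, -6340094, -1720287766, 10367697820562, -54403534684747],
    ![6, 2352, 4337532, -667210890, 3108823806819, 195538681447725],
    ![4, 1807, -3739394, -1450698494, -3046236737904, -198339970089357],
    ![-6, -2957, 3508556, 711099018, -11408058810208, -5265072305389],
    ![11, -250, 4732133, -123122563, 4071819292701, 304861244227548]]

/-- Coefficients expressing `∑ⱼ (Ψ₃)ᵢⱼ cⱼ` through `p₁, …, p₆` modulo `3^31`. -/
def mH3 : Fin 8 → Fin 6 → ℤ :=
  ![![0, 0, 0, 0, 0, 0],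
    ![0, 0, 0, 0, 0, 0],
    ![7, 1120, 6058131, 525171060, -4496129119435, 0],
    ![11, 1948, -2390897, -708931804, 6147348287454, 0],
    ![11, 729, -3218554, -992877669, 8422130349333, 0],
    ![6, 1274, 4613112, -863906553, -3081886943274, 0],
    ![-7, -2025, 1909251, 546852789, -10654450867989, 0],
    ![0, 0, 0, 0, 7625597484987, 0]]

lemma cert_T (i : Fin 6) (j : Fin 8) :
    (3 ^ 31 : ℤ) ∣ (mT (i.succ) j - ∑ l, mT i.castSucc l * mPsi2 l j) := by
  revert i j
  decide +kernel

lemma cert_gen (i j : Fin 8) :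
    (3 ^ 31 : ℤ) ∣ ((1 : Matrix (Fin 8) (Fin 8) ℤ) i j - (∑ l, mC i l * mT l j
      + ∑ l, mB i l * mPsi3 (Fin.castLE (by norm_num) l) j)) := by
  revert i j
  decide +kernel

lemma cert_P (n : Fin 2) (j : Fin 8) :
    (3 ^ 31 : ℤ) ∣ (∑ l, mP (Fin.natAdd 4 n) l * mT l j - ∑ l, mBP n l * mPsi3 l j) := by
  revert n j
  decide +kernel

lemma cert_H3 (i : Fin 8) (l : Fin 7) :
    (3 ^ 31 : ℤ) ∣ (∑ j, mPsi3 i j * mC j l - ∑ n, mH3 i n * mP n l) := by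
  revert i l
  decide +kernel

/-- Here `Fin.cons 0 (Fin.init (mC i))` is the coefficient vector of `X * c_i`. -/
lemma cert_H2 (i : Fin 8) (l : Fin 7) :
    (3 ^ 31 : ℤ) ∣ (∑ j, mPsi2 i j * mC j l
      - ((Fin.cons 0 (Fin.init (mC i)) : Fin 7 → ℤ) l + ∑ n, mH2 i n * mP n l)) := by
  revert i l
  decide +kernel

lemma mC_last (i : Fin 8) : mC i (Fin.last 6) = 0 := by
  revert i
  decide +kernel

lemma psiCols_two (i j : Fin 8) : psiCols 2 i j = mPsi2 i j := by
  revert i j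
  decide +kernel

lemma psiCols_three (i j : Fin 8) : psiCols 3 i j = mPsi3 i j := by
  revert i j
  decide +kernel

/-! ### Polynomial relations between `Ψ₂`, `Ψ₃` and the generator `w₁` -/

/-- The value at `z` of the polynomial of degree at most `6` with coefficient vector `p`. -/
def polyVal {S : Type*} [CommRing S] (p : Fin 7 → ℤ) (z : S) : S :=
  ∑ l, (p l : S) * z ^ (l : ℕ)

section Values

variable {S : Type*} [CommRing S]

lemma polyVal_comb {ι : Type*} [Fintype ι] (a : ι → ℤ) (M : ι → Fin 7 → ℤ) (z : S) :
    polyVal (fun l => ∑ j, a j * M j l) z = ∑ j, (a j : S) * polyVal (M j) z := by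
  simp only [polyVal, Finset.mul_sum, Int.cast_sum, Int.cast_mul, Finset.sum_mul]
  rw [Finset.sum_comm]
  simp only [mul_assoc]

lemma polyVal_add (p q : Fin 7 → ℤ) (z : S) :
    polyVal (fun l => p l + q l) z = polyVal p z + polyVal q z := by
  simp only [polyVal, Int.cast_add, add_mul, Finset.sum_add_distrib]

lemma intCast_congr (h31 : (3 : S) ^ 31 = 0) {a b : ℤ} (h : (3 ^ 31 : ℤ) ∣ (a - b)) :
    (a : S) = b := by
  obtain ⟨r, hr⟩ := h
  have := congrArg (Int.cast : ℤ → S) hr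
  rw [Int.cast_sub, Int.cast_mul, Int.cast_pow, Int.cast_ofNat, h31, zero_mul] at this
  exact sub_eq_zero.1 this

lemma polyVal_congr (h31 : (3 : S) ^ 31 = 0) {p q : Fin 7 → ℤ}
    (h : ∀ l, (3 ^ 31 : ℤ) ∣ (p l - q l)) (z : S) : polyVal p z = polyVal q z :=
  Finset.sum_congr rfl fun l _ => by rw [intCast_congr h31 (h l)]

lemma polyVal_shift (p : Fin 7 → ℤ) (hp : p (Fin.last 6) = 0) (z : S) :
    polyVal (Fin.cons 0 (Fin.init p)) z = z * polyVal p z := by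
  unfold polyVal
  rw [Fin.sum_univ_succ, Fin.sum_univ_castSucc (n := 6) (f := fun l => (p l : S) * z ^ (l : ℕ)), hp]
  simp only [Fin.cons_zero, Fin.cons_succ, Fin.init, Fin.val_succ, Fin.val_castSucc,
    Int.cast_zero, zero_mul, zero_add, add_zero, Finset.mul_sum]
  exact Finset.sum_congr rfl fun l _ => by ring

/-- At a common zero `z` of `p₁, …, p₆`, the assignment `w_j ↦ c_j(z)` kills the image
of `Ψ₃`. -/
lemma psi3_relation (h31 : (3 : S) ^ 31 = 0) (z : S) (hP : ∀ n, polyVal (mP n) z = 0)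
    (i : Fin 8) : ∑ j, (mPsi3 i j : S) * polyVal (mC j) z = 0 := by
  rw [← polyVal_comb, polyVal_congr h31 (cert_H3 i), polyVal_comb]
  simp [hP]

/-- At a common zero `z` of `p₁, …, p₆`, the assignment `w_j ↦ c_j(z)` turns `Ψ₂` into
multiplication by `z`. -/
lemma psi2_relation (h31 : (3 : S) ^ 31 = 0) (z : S) (hP : ∀ n, polyVal (mP n) z = 0)
    (i : Fin 8) : ∑ j, (mPsi2 i j : S) * polyVal (mC j) z = z * polyVal (mC i) z := by
  rw [← polyVal_comb, polyVal_congr h31 (cert_H2 i), polyVal_add, polyVal_comb,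
    polyVal_shift _ (mC_last i)]
  simp [hP]

variable {N : Type*} [AddCommGroup N] [Module S N]

lemma sum_smul_comb {ι κ : Type*} [Fintype ι] [Fintype κ] (a : ι → ℤ) (M : ι → κ → ℤ)
    (γ : κ → N) : ∑ j, (∑ l, a l * M l j) • γ j = ∑ l, a l • ∑ j, M l j • γ j := by
  simp only [Finset.sum_smul, Finset.smul_sum, mul_smul]
  rw [Finset.sum_comm]

lemma sum_smul_congr (h31 : ∀ v : N, (3 ^ 31 : ℤ) • v = 0) {a b : Fin 8 → ℤ}
    (h : ∀ j, (3 ^ 31 : ℤ) ∣ (a j - b j)) (γ : Fin 8 → N) :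
    ∑ j, a j • γ j = ∑ j, b j • γ j := by
  refine Finset.sum_congr rfl fun j _ => ?_
  obtain ⟨r, hr⟩ := h j
  rw [← sub_eq_zero, ← sub_smul, hr, mul_smul, h31]

lemma sum_mT_smul (h31 : ∀ v : N, (3 ^ 31 : ℤ) • v = 0) (γ : Fin 8 → N) (z : S)
    (h2 : ∀ i, ∑ j, mPsi2 i j • γ j = z • γ i) (i : Fin 7) :
    ∑ j, mT i j • γ j = z ^ (i : ℕ) • γ 0 := by
  induction i using Fin.induction with
  | zero => simp [Fin.sum_univ_succ, mT]
  | succ i ih =>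
    rw [sum_smul_congr h31 (cert_T i), sum_smul_comb]
    simp only [h2]
    simp only [smul_comm _ z (_ : N)]
    rw [← Finset.smul_sum, ih, smul_smul]
    simp [pow_succ']

lemma sum_polyVal_smul (h31 : ∀ v : N, (3 ^ 31 : ℤ) • v = 0) (γ : Fin 8 → N) (z : S)
    (h2 : ∀ i, ∑ j, mPsi2 i j • γ j = z • γ i) (p : Fin 7 → ℤ) :
    ∑ j, (∑ l, p l * mT l j) • γ j = polyVal p z • γ 0 := by
  rw [sum_smul_comb]
  simp only [sum_mT_smul h31 γ z h2, polyVal, Finset.sum_smul, mul_smul, Int.cast_smul_eq_zsmul]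

/-- In a module killed by `3^31` in which `Ψ₃` acts as `0` and `Ψ₂` as `z`, the class of `w₁`
generates. -/
lemma gen_relation (h31 : ∀ v : N, (3 ^ 31 : ℤ) • v = 0) (γ : Fin 8 → N) (z : S)
    (h2 : ∀ i, ∑ j, mPsi2 i j • γ j = z • γ i) (h3 : ∀ i, ∑ j, mPsi3 i j • γ j = 0)
    (i : Fin 8) : γ i = polyVal (mC i) z • γ 0 := by
  have h := sum_smul_congr h31 (cert_gen i) γ
  simp only [add_smul, Finset.sum_add_distrib] at h
  rw [sum_polyVal_smul h31 γ z h2, sum_smul_comb (mB i) (fun l j => mPsi3 _ j)] at h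
  simpa [h3, Matrix.one_apply] using h

/-- In the situation of `gen_relation`, `p₅(z)` and `p₆(z)` kill the class of `w₁`. -/
lemma P_relation (h31 : ∀ v : N, (3 ^ 31 : ℤ) • v = 0) (γ : Fin 8 → N) (z : S)
    (h2 : ∀ i, ∑ j, mPsi2 i j • γ j = z • γ i) (h3 : ∀ i, ∑ j, mPsi3 i j • γ j = 0)
    (n : Fin 2) : polyVal (mP (Fin.natAdd 4 n)) z • γ 0 = 0 := by
  have h := sum_smul_congr h31 (cert_P n) γ
  rw [sum_polyVal_smul h31 γ z h2, sum_smul_comb] at h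
  simpa [h3] using h

end Values

/-! ### The structure of `C_m` in terms of the values `p_n(2^m)` -/

lemma single_mem_latt8 (j : Fin 8) : (Pi.single j 1 : Fin 8 → ℚ) ∈ latt8 :=
  Submodule.subset_span ⟨j, rfl⟩

lemma mem_latt8 {v : Fin 8 → ℚ} : v ∈ latt8 ↔ ∀ j, v j ∈ ZLoc 3 := by
  constructor
  · intro hv
    induction hv using Submodule.span_induction with
    | mem x hx =>
      obtain ⟨i, rfl⟩ := hx
      intro j
      by_cases h : j = i
      · subst h
        simp [one_mem]
      · simp [h, zero_mem]
    | zero => exact fun j => zero_mem _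
    | add x y _ _ hx hy => exact fun j => add_mem (hx j) (hy j)
    | smul a x _ hx => exact fun j => mul_mem a.2 (hx j)
  · intro h
    have : v = ∑ j, (⟨v j, h j⟩ : ZLoc 3) • (Pi.single j 1 : Fin 8 → ℚ) := by
      funext i
      simp [Finset.sum_apply, Subring.smul_def, Pi.single_apply]
    rw [this]
    exact Submodule.sum_mem _ fun j _ => Submodule.smul_mem _ _ (single_mem_latt8 j)

lemma psiLin_single (t : ℚ) (j : Fin 8) : psiLin t (Pi.single j 1) = psiCols t j := by
  funext i
  simp [psiLin]

lemma intCast_mem_latt8 (a : Fin 8 → ℤ) : (fun j => (a j : ℚ)) ∈ latt8 :=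
  mem_latt8.2 fun j => intCast_mem _ (a j)

lemma psi2_single (j : Fin 8) : psiLin 2 (Pi.single j 1) = fun i => (mPsi2 j i : ℚ) := by
  rw [psiLin_single]
  exact funext fun i => psiCols_two j i

lemma psi3_single (j : Fin 8) : psiLin 3 (Pi.single j 1) = fun i => (mPsi3 j i : ℚ) := by
  rw [psiLin_single]
  exact funext fun i => psiCols_three j i

lemma map_latt8_le {t : ℚ} (M : Fin 8 → Fin 8 → ℤ)
    (h : ∀ j, psiLin t (Pi.single j 1) = fun i => (M j i : ℚ)) :
    latt8.map ((psiLin t).restrictScalars (ZLoc 3)) ≤ latt8 := by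
  rw [Submodule.map_le_iff_le_comap]
  refine Submodule.span_le.2 ?_
  rintro _ ⟨j, rfl⟩
  change psiLin t (Pi.single j 1) ∈ latt8
  rw [h]
  exact intCast_mem_latt8 _

lemma two_zpow_mem (m : ℤ) : (2 : ℚ) ^ m ∈ ZLoc 3 := by
  rw [mem_ZLoc_iff]
  have h2 : ‖(2 : ℚ_[3])‖ = 1 := by
    have := Padic.norm_natCast_eq_one_iff (p := 3) (n := 2)
    simpa using this.2 (by norm_num)
  push_cast
  rw [norm_zpow, h2, one_zpow]

/-- `2^m` as an element of `ℤ_(3)`. -/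
def twoPow (m : ℤ) : ZLoc 3 := ⟨(2 : ℚ) ^ m, two_zpow_mem m⟩

/-- The submodule of relations defining `C_m`. -/
abbrev relSpan (m : ℤ) : Submodule (ZLoc 3) (Fin 8 → ℚ) :=
  Submodule.span (ZLoc 3)
    ((Set.range fun j : Fin 8 => psiLin 3 (Pi.single j 1)) ∪
     (Set.range fun j : Fin 8 =>
       psiLin 2 (Pi.single j 1) - (2 : ℚ) ^ m • (Pi.single j 1 : Fin 8 → ℚ)))

/-- The class of `w_j` in `C_m`. -/
def wClass (m : ℤ) (j : Fin 8) : CE8 m :=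
  Submodule.Quotient.mk ⟨Pi.single j 1, single_mem_latt8 j⟩

/-- The coordinates in `ℤ_(3)` of a vector of the lattice. -/
def coord (v : latt8) (j : Fin 8) : ZLoc 3 := ⟨(v : Fin 8 → ℚ) j, mem_latt8.1 v.2 j⟩

lemma mk_eq_sum (m : ℤ) (v : latt8) :
    (Submodule.Quotient.mk v : CE8 m) = ∑ j, coord v j • wClass m j := by
  have : v = ∑ j, coord v j • (⟨Pi.single j 1, single_mem_latt8 j⟩ : latt8) := by
    apply Subtype.ext
    funext i
    simp [coord, Finset.sum_apply, Subring.smul_def, Pi.single_apply]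
  conv_lhs => rw [this]
  rw [← Submodule.mkQ_apply, map_sum]
  simp only [map_smul]
  rfl

lemma sum_smul_wClass (m : ℤ) (a : Fin 8 → ℤ) :
    ∑ j, a j • wClass m j
      = (Submodule.Quotient.mk ⟨fun j => (a j : ℚ), intCast_mem_latt8 a⟩ : CE8 m) := by
  rw [mk_eq_sum]
  refine Finset.sum_congr rfl fun j _ => ?_
  rw [← Int.cast_smul_eq_zsmul (ZLoc 3)]
  rfl

lemma psi3_wClass (m : ℤ) (i : Fin 8) : ∑ j, mPsi3 i j • wClass m j = 0 := by
  rw [sum_smul_wClass, Submodule.Quotient.mk_eq_zero]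
  change (fun j => (mPsi3 i j : ℚ)) ∈ relSpan m
  rw [← psi3_single]
  exact Submodule.subset_span (.inl ⟨i, rfl⟩)

lemma psi2_wClass (m : ℤ) (i : Fin 8) :
    ∑ j, mPsi2 i j • wClass m j = twoPow m • wClass m i := by
  rw [sum_smul_wClass]
  unfold wClass
  rw [← Submodule.Quotient.mk_smul, Submodule.Quotient.eq]
  change (fun j => (mPsi2 i j : ℚ)) - (2 : ℚ) ^ m • (Pi.single i 1 : Fin 8 → ℚ) ∈ relSpan m
  rw [← psi2_single]
  exact Submodule.subset_span (.inr ⟨i, rfl⟩)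

/-- Upper bound for `C_m`, by Nakayama's lemma: the relations modulo `3^31` suffice, as
`e ≤ 30`. -/
lemma CE8_upper (m : ℤ) (z : ZLoc 3) (hz : (3 : ZLoc 3) ^ 31 ∣ twoPow m - z)
    (e : ℕ) (he : e ≤ 30)
    (h2 : ∃ a b : ZLoc 3, (3 : ZLoc 3) ^ e = a * polyVal (mP 4) z + b * polyVal (mP 5) z) :
    (∀ v : CE8 m, (3 : ZLoc 3) ^ e • v = 0) ∧ ∀ v : CE8 m, ∃ r : ZLoc 3, v = r • wClass m 0 := by
  let S31 : Submodule (ZLoc 3) (CE8 m) :=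
    LinearMap.range (LinearMap.lsmul (ZLoc 3) (CE8 m) (3 ^ 31))
  let γ : Fin 8 → CE8 m ⧸ S31 := fun j => S31.mkQ (wClass m j)
  have hkill : ∀ v : CE8 m ⧸ S31, (3 : ZLoc 3) ^ 31 • v = 0 := by
    intro v
    obtain ⟨v, rfl⟩ := S31.mkQ_surjective v
    rw [← map_smul, Submodule.mkQ_apply, Submodule.Quotient.mk_eq_zero]
    exact ⟨v, rfl⟩
  have h31 : ∀ v : CE8 m ⧸ S31, (3 ^ 31 : ℤ) • v = 0 := by
    intro v
    rw [← Int.cast_smul_eq_zsmul (ZLoc 3), Int.cast_pow, Int.cast_ofNat]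
    exact hkill v
  have hγ3 : ∀ i, ∑ j, mPsi3 i j • γ j = 0 := by
    intro i
    have := congrArg S31.mkQ (psi3_wClass m i)
    simpa only [map_sum, map_zsmul, map_zero] using this
  have hγ2 : ∀ i, ∑ j, mPsi2 i j • γ j = z • γ i := by
    intro i
    have := congrArg S31.mkQ (psi2_wClass m i)
    simp only [map_sum, map_zsmul, map_smul] at this
    rw [this, ← sub_eq_zero, ← sub_smul]
    obtain ⟨s, hs⟩ := hz
    rw [hs, mul_smul]
    exact hkill _
  have hgen := gen_relation h31 γ z hγ2 hγ3
  have hP4 : polyVal (mP 4) z • γ 0 = 0 := P_relation h31 γ z hγ2 hγ3 0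
  have hP5 : polyVal (mP 5) z • γ 0 = 0 := P_relation h31 γ z hγ2 hγ3 1
  have he0 : (3 : ZLoc 3) ^ e • γ 0 = 0 := by
    obtain ⟨a, b, hab⟩ := h2
    rw [hab, add_smul, mul_smul, mul_smul, hP4, hP5, smul_zero, smul_zero, add_zero]
  have hcyc : ∀ v : CE8 m, ∃ r : ZLoc 3, S31.mkQ v = r • γ 0 := by
    intro v
    obtain ⟨v, rfl⟩ := Submodule.Quotient.mk_surjective _ v
    refine ⟨∑ j, coord v j * polyVal (mC j) z, ?_⟩
    rw [mk_eq_sum, map_sum, Finset.sum_smul]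
    refine Finset.sum_congr rfl fun j _ => ?_
    rw [map_smul, mul_smul, ← hgen]
  let K : Submodule (ZLoc 3) (CE8 m) :=
    LinearMap.range (LinearMap.lsmul (ZLoc 3) (CE8 m) (3 ^ e))
  have hlatt : Module.Finite (ZLoc 3) latt8 :=
    Module.Finite.iff_fg.2 (Submodule.fg_span (Set.finite_range _))
  have hK : K = ⊥ := by
    refine Submodule.eq_bot_of_le_smul_of_le_jacobson_bot (Ideal.span {(3 : ZLoc 3)}) K ?_ ?_ ?_
    · exact Module.Finite.iff_fg.1 inferInstance
    · rintro _ ⟨v, rfl⟩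
      have hv : (3 : ZLoc 3) ^ e • v ∈ S31 := by
        rw [← Submodule.Quotient.mk_eq_zero, ← Submodule.mkQ_apply, map_smul]
        obtain ⟨r, hr⟩ := hcyc v
        rw [hr, smul_comm, he0, smul_zero]
      obtain ⟨w, hw⟩ := hv
      have hpow : (3 : ZLoc 3) ^ 31 = 3 * (3 ^ e * 3 ^ (30 - e)) := by
        rw [← pow_add, ← pow_succ']
        congr 1
        omega
      rw [LinearMap.lsmul_apply] at hw ⊢
      rw [← hw, hpow, mul_smul, mul_smul]
      exact Submodule.smul_mem_smul (Ideal.mem_span_singleton_self _) ⟨_, rfl⟩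
    · rw [Ideal.span_singleton_le_iff_mem]
      exact three_mem_jacobson
  have hK0 : ∀ v : CE8 m, (3 : ZLoc 3) ^ e • v = 0 := by
    intro v
    have : (3 : ZLoc 3) ^ e • v ∈ K := ⟨v, rfl⟩
    rwa [hK, Submodule.mem_bot] at this
  refine ⟨hK0, fun v => ?_⟩
  obtain ⟨r, hr⟩ := hcyc v
  refine ⟨r, ?_⟩
  have hmem : v - r • wClass m 0 ∈ S31 := by
    rw [← Submodule.Quotient.mk_eq_zero, ← Submodule.mkQ_apply, map_sub, map_smul, hr]
    exact sub_self _
  obtain ⟨w, hw⟩ := hmem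
  rw [LinearMap.lsmul_apply, show 31 = (31 - e) + e by omega, pow_add, mul_smul, hK0,
    smul_zero] at hw
  exact (sub_eq_zero.1 hw.symm)

/-- Lower bound for `C_m`: the homomorphism `w_j ↦ c_j(z)` onto `ℤ/3^e`. -/
lemma CE8_lower (m : ℤ) (z : ZLoc 3) (hz : (3 : ZLoc 3) ^ 31 ∣ twoPow m - z)
    (e : ℕ) (he : e ≤ 30) (h1 : ∀ n, (3 : ZLoc 3) ^ e ∣ polyVal (mP n) z) :
    ∃ φ : CE8 m →+ ZMod (3 ^ e), ∀ r : ZLoc 3, φ (r • wClass m 0) = red e r := by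
  let _ : Module (ZLoc 3) (ZMod (3 ^ e)) := Module.compHom _ (red e)
  have hsmul : ∀ (r : ZLoc 3) (c : ZMod (3 ^ e)), r • c = red e r * c := fun _ _ => rfl
  have h3e : (3 : ZMod (3 ^ e)) ^ e = 0 := by
    have := ZMod.natCast_self (3 ^ e)
    exact_mod_cast this
  have h31 : (3 : ZMod (3 ^ e)) ^ 31 = 0 := by
    rw [show 31 = e + (31 - e) by omega, pow_add, h3e, zero_mul]
  have hred : ∀ r : ZLoc 3, (3 : ZLoc 3) ^ e ∣ r → red e r = 0 := by
    rintro _ ⟨s, rfl⟩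
    rw [map_mul, map_pow, map_ofNat, h3e, zero_mul]
  set zb : ZMod (3 ^ e) := red e z with hzb
  have hx : red e (twoPow m) = zb := by
    rw [hzb, ← sub_eq_zero, ← map_sub]
    exact hred _ ((pow_dvd_pow _ (by omega)).trans hz)
  have hP : ∀ n, polyVal (mP n) zb = 0 := by
    intro n
    rw [← hred _ (h1 n)]
    simp [polyVal, hzb]
  let φ₀ : latt8 →ₗ[ZLoc 3] ZMod (3 ^ e) :=
    { toFun := fun v => ∑ j, red e (coord v j) * polyVal (mC j) zb
      map_add' := fun v w => by
        rw [← Finset.sum_add_distrib]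
        refine Finset.sum_congr rfl fun j _ => ?_
        rw [← add_mul, ← map_add]
        rfl
      map_smul' := fun r v => by
        rw [RingHom.id_apply, hsmul, Finset.mul_sum]
        refine Finset.sum_congr rfl fun j _ => ?_
        rw [← mul_assoc, ← map_mul]
        rfl }
  have hφ₀ : ∀ v, φ₀ v = ∑ j, red e (coord v j) * polyVal (mC j) zb := fun _ => rfl
  have hcast : ∀ a : Fin 8 → ℤ, φ₀ ⟨fun j => (a j : ℚ), intCast_mem_latt8 a⟩
      = ∑ j, (a j : ZMod (3 ^ e)) * polyVal (mC j) zb := by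
    intro a
    rw [hφ₀]
    refine Finset.sum_congr rfl fun j _ => ?_
    rw [← map_intCast (red e)]
    rfl
  have hsingle : ∀ i, φ₀ ⟨Pi.single i 1, single_mem_latt8 i⟩ = polyVal (mC i) zb := by
    intro i
    have : φ₀ ⟨Pi.single i 1, single_mem_latt8 i⟩
        = ∑ j, (if j = i then 1 else 0) * polyVal (mC j) zb := by
      rw [hφ₀]
      refine Finset.sum_congr rfl fun j _ => ?_
      congr 1
      split_ifs with h
      · subst h
        rw [← map_one (red e)]
        congr 1
        exact Subtype.ext (by simp [coord])
      · rw [← map_zero (red e)]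
        congr 1
        exact Subtype.ext (by simp [coord, h])
    rw [this]
    simp
  have hle : relSpan m ≤ (LinearMap.ker φ₀).map latt8.subtype := by
    refine Submodule.span_le.2 ?_
    rintro _ (⟨i, rfl⟩ | ⟨i, rfl⟩)
    · refine ⟨⟨fun j => (mPsi3 i j : ℚ), intCast_mem_latt8 _⟩, ?_, (psi3_single i).symm⟩
      rw [SetLike.mem_coe, LinearMap.mem_ker, hcast]
      exact psi3_relation h31 zb hP i
    · refine ⟨⟨fun j => (mPsi2 i j : ℚ), intCast_mem_latt8 _⟩
        - twoPow m • ⟨Pi.single i 1, single_mem_latt8 i⟩, ?_, ?_⟩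
      · rw [SetLike.mem_coe, LinearMap.mem_ker, map_sub, map_smul, hcast, hsingle, hsmul, hx,
          psi2_relation h31 zb hP i, sub_self]
      · change (fun j => (mPsi2 i j : ℚ)) - (2 : ℚ) ^ m • (Pi.single i 1 : Fin 8 → ℚ) = _
        rw [← psi2_single]
  have hker : Submodule.comap latt8.subtype (relSpan m) ≤ LinearMap.ker φ₀ := by
    intro v hv
    obtain ⟨w, hw, hwv⟩ := hle hv
    rwa [← Subtype.ext hwv]
  let φ : CE8 m →ₗ[ZLoc 3] ZMod (3 ^ e) := Submodule.liftQ _ φ₀ hker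
  refine ⟨φ.toAddMonoidHom, fun r => ?_⟩
  have h0 : φ (wClass m 0) = 1 := by
    have : φ (wClass m 0) = polyVal (mC 0) zb := hsingle 0
    rw [this]
    simp [polyVal, mC, Fin.sum_univ_succ]
  change φ (r • wClass m 0) = _
  rw [map_smul, h0, hsmul, mul_one]

/-- If `2^m ≡ z` modulo `3^31` and the values `p_n(z)` generate the ideal `(3^e)` with
`e ≤ 30`, then `C_m` is cyclic of order `3^e`. -/
theorem CE8_cyclic (m : ℤ) (z : ZLoc 3) (hz : (3 : ZLoc 3) ^ 31 ∣ twoPow m - z)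
    (e : ℕ) (he : e ≤ 30) (h1 : ∀ n, (3 : ZLoc 3) ^ e ∣ polyVal (mP n) z)
    (h2 : ∃ a b : ZLoc 3, (3 : ZLoc 3) ^ e = a * polyVal (mP 4) z + b * polyVal (mP 5) z) :
    Nonempty (CE8 m ≃+ ZMod (3 ^ e)) := by
  obtain ⟨hkill, hgen⟩ := CE8_upper m z hz e he h2
  obtain ⟨φ, hφ⟩ := CE8_lower m z hz e he h1
  refine ⟨AddEquiv.ofBijective φ ⟨?_, ?_⟩⟩
  · rw [injective_iff_map_eq_zero]
    intro v hv
    obtain ⟨r, rfl⟩ := hgen v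
    rw [hφ] at hv
    obtain ⟨s, rfl⟩ := red_eq_zero hv
    rw [mul_smul, hkill]
  · intro c
    obtain ⟨a, rfl⟩ := ZMod.intCast_surjective c
    exact ⟨(a : ZLoc 3) • wClass m 0, by rw [hφ, map_intCast]⟩

/-! ### Taylor expansions of the `p_n` -/

/-- The `i`-th coefficient of `p(x₀ + h X)`. -/
def tay (p : Fin 7 → ℤ) (x₀ h : ℤ) (i : Fin 7) : ℤ :=
  ∑ k : Fin 7, p k * (((k : ℕ).choose i : ℕ) * x₀ ^ ((k : ℕ) - i) * h ^ (i : ℕ))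

lemma polyVal_tay {S : Type*} [CommRing S] (p : Fin 7 → ℤ) (x₀ h : ℤ) (y : S) :
    polyVal p ((x₀ : S) + h * y) = polyVal (tay p x₀ h) y := by
  have hpow : ∀ k : Fin 7, ((x₀ : S) + h * y) ^ (k : ℕ)
      = ∑ i : Fin 7, (((k : ℕ).choose i : ℕ) * (x₀ : S) ^ ((k : ℕ) - i) * (h : S) ^ (i : ℕ))
        * y ^ (i : ℕ) := by
    intro k
    rw [add_comm, add_pow, Fin.sum_univ_eq_sum_range (fun i => (((k : ℕ).choose i : ℕ)
      * (x₀ : S) ^ ((k : ℕ) - i) * (h : S) ^ i) * y ^ i) 7]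
    rw [← Finset.sum_subset (Finset.range_subset_range.2 (by omega : (k : ℕ) + 1 ≤ 7))]
    · exact Finset.sum_congr rfl fun i _ => by ring
    · intro i _ hi
      rw [Nat.choose_eq_zero_of_lt (by simpa using hi)]
      simp
  simp only [polyVal, hpow, tay, Finset.mul_sum, Int.cast_sum, Finset.sum_mul]
  rw [Finset.sum_comm]
  refine Finset.sum_congr rfl fun i _ => Finset.sum_congr rfl fun k _ => ?_
  push_cast
  ring

lemma polyVal_succ {S : Type*} [CommRing S] (g : Fin 7 → ℤ) (y : S) :
    polyVal g y = g 0 + y * ∑ i : Fin 6, (g i.succ : S) * y ^ (i : ℕ) := by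
  rw [polyVal, Fin.sum_univ_succ, Finset.mul_sum]
  simp only [Fin.val_zero, pow_zero, mul_one, Fin.val_succ, pow_succ]
  congr 1
  exact Finset.sum_congr rfl fun i _ => by ring

lemma intCast_dvd {a : ℕ} {g : ℤ} (h : (3 ^ a : ℤ) ∣ g) : (3 : ZLoc 3) ^ a ∣ (g : ZLoc 3) := by
  obtain ⟨r, rfl⟩ := h
  exact ⟨r, by push_cast; ring⟩

/-- The exponential `2^m` near a base point: if `2^a ≡ x₀` modulo `3^31` and `m = a + 2dn`, then
`2^m ≡ x₀ + 3d x₀ · n u` for a unit `u`. -/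
lemma twoPow_congr (m : ℤ) (a : ℕ) (x₀ d n : ℤ) (ha : (3 ^ 31 : ℤ) ∣ (2 ^ a - x₀))
    (hm : m = a + 2 * (d * n)) :
    ∃ u : ZLoc 3, IsUnit u ∧
      (3 : ZLoc 3) ^ 31 ∣ twoPow m - ((x₀ : ZLoc 3) + ((3 * d * x₀ : ℤ) : ZLoc 3) * (n * u)) := by
  obtain ⟨u, hu, h4⟩ := four_zpow (d * n)
  refine ⟨u, hu, ?_⟩
  have h : twoPow m = (2 ^ a : ZLoc 3) * (1 + 3 * d * n * u) := by
    apply Subtype.ext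
    change (2 : ℚ) ^ m = 2 ^ a * (1 + 3 * ((d : ZLoc 3) : ℚ) * ((n : ZLoc 3) : ℚ) * u)
    rw [hm, zpow_add₀ (by norm_num), zpow_mul, zpow_natCast]
    norm_num only [zpow_ofNat]
    rw [h4]
    push_cast
    ring
  have h' : twoPow m - ((x₀ : ZLoc 3) + ((3 * d * x₀ : ℤ) : ZLoc 3) * (n * u))
      = ((2 ^ a - x₀ : ℤ) : ZLoc 3) * (1 + 3 * d * n * u) := by
    rw [h]
    push_cast
    ring
  rw [h']
  exact (intCast_dvd ha).mul_right _

/-- The case where `p₆(2^m)` has constant valuation `e` on a residue class. -/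
lemma CE8_const (m : ℤ) (x₀ h : ℤ) (y : ZLoc 3)
    (hz : (3 : ZLoc 3) ^ 31 ∣ twoPow m - ((x₀ : ZLoc 3) + (h : ZLoc 3) * y))
    (e : ℕ) (he : e ≤ 30)
    (hdiv : ∀ n i, (3 ^ e : ℤ) ∣ tay (mP n) x₀ h i)
    (h0 : ¬ (3 ^ (e + 1) : ℤ) ∣ tay (mP 5) x₀ h 0)
    (hs : ∀ i : Fin 6, (3 ^ (e + 1) : ℤ) ∣ tay (mP 5) x₀ h i.succ) :
    Nonempty (CE8 m ≃+ ZMod (3 ^ e)) := by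
  refine CE8_cyclic m _ hz e he (fun n => ?_) ?_
  · rw [polyVal_tay]
    exact Finset.dvd_sum fun i _ => (intCast_dvd (hdiv n i)).mul_right _
  · obtain ⟨g, hg⟩ := hdiv 5 0
    have hg3 : ¬ (3 : ℤ) ∣ g := by
      intro h3
      apply h0
      rw [hg, pow_succ]
      exact mul_dvd_mul_left _ h3
    have htail : (3 : ZLoc 3) ^ (e + 1) ∣
        ∑ i : Fin 6, (tay (mP 5) x₀ h i.succ : ZLoc 3) * y ^ (i : ℕ) :=
      Finset.dvd_sum fun i _ => (intCast_dvd (hs i)).mul_right _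
    obtain ⟨s, hs'⟩ := htail
    obtain ⟨w, hw⟩ := isUnit_intCast_add hg3 (y * s)
    refine ⟨0, ((w⁻¹ : (ZLoc 3)ˣ) : ZLoc 3), ?_⟩
    rw [polyVal_tay (mP 5), polyVal_succ (tay (mP 5) x₀ h), hs', hg]
    have hww := w.inv_mul
    rw [hw] at hww
    push_cast
    linear_combination -(3 : ZLoc 3) ^ e * hww

/-- Translation of `e = min(s + ν₃(9n), E)` into divisibility in `ℤ_(3)`. -/
lemma nuE_facts (n : ℤ) (s E e : ℕ) (hsE : s + 2 < E)
    (he : (e : ℕ∞) = min ((s : ℕ∞) + nuE 3 (9 * n)) E) :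
    e ≤ E ∧ s + 2 ≤ e ∧ (3 : ZLoc 3) ^ e ∣ 3 ^ (s + 2) * n ∧
      (e = E ∨ (3 : ZLoc 3) ^ (s + 2) * n ∣ 3 ^ e) := by
  rcases eq_or_ne n 0 with rfl | hn
  · have : e = E := by
      simpa [nuE] using he
    subst this
    simp
    omega
  · have h9 : 9 * n ≠ 0 := by omega
    have hv9 : padicValInt 3 (9 * n) = 2 + padicValInt 3 n := by
      rw [padicValInt.mul (by norm_num) hn]
      congr 1
      rw [show (9 : ℤ) = ((3 ^ 2 : ℕ) : ℤ) by norm_num, padicValInt.of_nat, padicValNat.prime_pow]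
    rw [nuE, if_neg h9, hv9] at he
    have he' : e = min (s + (2 + padicValInt 3 n)) E := by
      rw [← Nat.cast_add, ← Nat.mono_cast.map_min] at he
      exact Nat.cast_injective he
    obtain ⟨w, hw⟩ : ((3 : ℕ) : ℤ) ^ padicValInt 3 n ∣ n := padicValInt_dvd n
    set v := padicValInt 3 n with hv
    have hw3 : ¬ (3 : ℤ) ∣ w := by
      intro h3
      have hd : ((3 : ℕ) : ℤ) ^ (v + 1) ∣ n := by
        conv_rhs => rw [hw]
        rw [pow_succ]
        exact mul_dvd_mul_left _ h3
      rw [padicValInt_dvd_iff] at hd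
      omega
    have hunit : IsUnit (w : ZLoc 3) := by
      simpa using isUnit_intCast_add hw3 0
    have hnR : (n : ZLoc 3) = 3 ^ v * w := by
      conv_lhs => rw [hw]
      push_cast
      ring
    have hmul : (3 : ZLoc 3) ^ (s + 2) * n = 3 ^ (s + 2 + v) * w := by
      rw [hnR, pow_add _ (s + 2)]
      ring
    refine ⟨by omega, by omega, ?_, ?_⟩
    · rw [hmul]
      exact (pow_dvd_pow _ (by omega)).mul_right _
    · rcases (by omega : e = E ∨ e = s + 2 + v) with h | h
      · exact .inl h
      · right
        rw [hmul, h]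
        exact hunit.mul_right_dvd.2 dvd_rfl

/-- The numerical conditions on the Taylor coefficients of the `p_n` at `x₀` under which the
values `p_n(x₀ + 27 x₀ y)` generate the ideal `(3^(s+2) y, 3^E)`; `L` and `M` are the indices of
the two polynomials that already generate it. -/
def TaylorCond (x₀ : ℤ) (s E : ℕ) (L M : Fin 6) : Prop :=
  (∀ n, (3 ^ E : ℤ) ∣ tay (mP n) x₀ (27 * x₀) 0) ∧
  (∀ n, ∀ i : Fin 6, (3 ^ (s + 2) : ℤ) ∣ tay (mP n) x₀ (27 * x₀) i.succ) ∧
  (∀ i : Fin 5, (3 ^ (s + 3) : ℤ) ∣ tay (mP L) x₀ (27 * x₀) i.succ.succ) ∧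
  ¬ (3 ^ (s + 3) : ℤ) ∣ tay (mP L) x₀ (27 * x₀) 1 ∧
  ¬ (3 ^ (E + (s + 3)) : ℤ) ∣
    (tay (mP M) x₀ (27 * x₀) 0 * tay (mP L) x₀ (27 * x₀) 1
      - tay (mP L) x₀ (27 * x₀) 0 * tay (mP M) x₀ (27 * x₀) 1)

instance (x₀ : ℤ) (s E : ℕ) (L M : Fin 6) : Decidable (TaylorCond x₀ s E L M) := by
  unfold TaylorCond
  infer_instance

/-- The case where the order of `C_m` depends on the valuation of `n`. -/
lemma CE8_min (m n : ℤ) (a : ℕ) (x₀ : ℤ) (s E : ℕ) (L M : Fin 6)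
    (ha : (3 ^ 31 : ℤ) ∣ (2 ^ a - x₀)) (hm : m = a + 2 * (9 * n))
    (hLM : (L = 4 ∧ M = 5) ∨ (L = 5 ∧ M = 4)) (hsE : s + 2 < E) (hE : E ≤ 30)
    (hT : TaylorCond x₀ s E L M) (e : ℕ)
    (he : (e : ℕ∞) = min ((s : ℕ∞) + nuE 3 (9 * n)) E) :
    Nonempty (CE8 m ≃+ ZMod (3 ^ e)) := by
  obtain ⟨heE, hse, hdvd, hor⟩ := nuE_facts n s E e hsE he
  obtain ⟨u, hu, hz⟩ := twoPow_congr m a x₀ 9 n ha hm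
  obtain ⟨hT0, hT1, hT2, hTb, hTdet⟩ := hT
  norm_num only at hz
  set y : ZLoc 3 := n * u with hy
  have hval : ∀ k, polyVal (mP k) ((x₀ : ZLoc 3) + ((27 * x₀ : ℤ) : ZLoc 3) * y)
      = tay (mP k) x₀ (27 * x₀) 0
        + y * ∑ i : Fin 6, (tay (mP k) x₀ (27 * x₀) i.succ : ZLoc 3) * y ^ (i : ℕ) :=
    fun k => by rw [polyVal_tay, polyVal_succ]
  refine CE8_cyclic m _ hz e (by omega) (fun k => ?_) ?_
  · rw [hval]
    refine dvd_add ((pow_dvd_pow _ heE).trans (intCast_dvd (hT0 k))) ?_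
    refine (hdvd.mul_right u).trans ?_
    have : (3 : ZLoc 3) ^ (s + 2) ∣
        ∑ i : Fin 6, (tay (mP k) x₀ (27 * x₀) i.succ : ZLoc 3) * y ^ (i : ℕ) :=
      Finset.dvd_sum fun i _ => (intCast_dvd (hT1 k i)).mul_right _
    rw [mul_assoc, mul_comm, ← hy]
    exact mul_dvd_mul_left _ this
  set z : ZLoc 3 := (x₀ : ZLoc 3) + ((27 * x₀ : ℤ) : ZLoc 3) * y with hzdef
  let I : Ideal (ZLoc 3) := Ideal.span {polyVal (mP 4) z, polyVal (mP 5) z}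
  suffices hI : (3 : ZLoc 3) ^ e ∈ I by
    obtain ⟨p, q, hpq⟩ := Ideal.mem_span_pair.1 hI
    exact ⟨p, q, hpq.symm⟩
  have h4 : polyVal (mP 4) z ∈ I := Ideal.subset_span (by simp)
  have h5 : polyVal (mP 5) z ∈ I := Ideal.subset_span (by simp)
  have hL : polyVal (mP L) z ∈ I := by
    rcases hLM with ⟨rfl, rfl⟩ | ⟨rfl, rfl⟩ <;> assumption
  have hM : polyVal (mP M) z ∈ I := by
    rcases hLM with ⟨rfl, rfl⟩ | ⟨rfl, rfl⟩ <;> assumption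
  obtain ⟨aL, haL⟩ := hT0 L
  obtain ⟨aM, haM⟩ := hT0 M
  obtain ⟨bL, hbL⟩ : (3 ^ (s + 2) : ℤ) ∣ tay (mP L) x₀ (27 * x₀) 1 := hT1 L 0
  obtain ⟨bM, hbM⟩ : (3 ^ (s + 2) : ℤ) ∣ tay (mP M) x₀ (27 * x₀) 1 := hT1 M 0
  have hbL3 : ¬ (3 : ℤ) ∣ bL := by
    intro h
    apply hTb
    rw [hbL, pow_succ _ (s + 2)]
    exact mul_dvd_mul_left _ h
  have hdet3 : ¬ (3 : ℤ) ∣ (aM * bL - aL * bM) := by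
    rintro ⟨r, hr⟩
    apply hTdet
    refine ⟨r, ?_⟩
    rw [haM, hbL, haL, hbM, pow_add _ E, pow_succ _ (s + 2)]
    linear_combination (3 : ℤ) ^ E * 3 ^ (s + 2) * hr
  have hsplit : ∀ k, ∑ i : Fin 6, (tay (mP k) x₀ (27 * x₀) i.succ : ZLoc 3) * y ^ (i : ℕ)
      = tay (mP k) x₀ (27 * x₀) 1
        + y * ∑ i : Fin 5, (tay (mP k) x₀ (27 * x₀) i.succ.succ : ZLoc 3) * y ^ (i : ℕ) := by
    intro k
    rw [Fin.sum_univ_succ, Finset.mul_sum]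
    simp only [Fin.val_zero, pow_zero, mul_one, Fin.val_succ, pow_succ, Fin.succ_zero_eq_one]
    congr 1
    exact Finset.sum_congr rfl fun i _ => by ring
  obtain ⟨tL, htL⟩ : (3 : ZLoc 3) ^ (s + 3) ∣
      ∑ i : Fin 5, (tay (mP L) x₀ (27 * x₀) i.succ.succ : ZLoc 3) * y ^ (i : ℕ) :=
    Finset.dvd_sum fun i _ => (intCast_dvd (hT2 i)).mul_right _
  obtain ⟨tM, htM⟩ : (3 : ZLoc 3) ^ (s + 2) ∣
      ∑ i : Fin 5, (tay (mP M) x₀ (27 * x₀) i.succ.succ : ZLoc 3) * y ^ (i : ℕ) :=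
    Finset.dvd_sum fun i _ => (intCast_dvd (hT1 M i.succ)).mul_right _
  have hvL : polyVal (mP L) z = 3 ^ E * aL + 3 ^ (s + 2) * y * (bL + 3 * (y * tL)) := by
    rw [hzdef, hval, hsplit, htL, haL, hbL]
    push_cast
    ring
  have hvM : polyVal (mP M) z = 3 ^ E * aM + 3 ^ (s + 2) * y * (bM + y * tM) := by
    rw [hzdef, hval, hsplit, htM, haM, hbM]
    push_cast
    ring
  have hbu : IsUnit ((bL : ZLoc 3) + 3 * (y * tL)) := isUnit_intCast_add hbL3 _
  rcases isUnit_or_dvd y with hyu | ⟨y', hy'⟩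
  -- If `y` is a unit, then `p_L(z)` is `3^(s+2)` times a unit because `s + 2 < E`.
  · have hE' : (3 : ZLoc 3) ^ E = 3 ^ (s + 2) * (3 * 3 ^ (E - (s + 3))) := by
      rw [← pow_succ', ← pow_add]
      congr 1
      omega
    have hun : IsUnit (y * (bL + 3 * (y * tL)) + 3 * (3 ^ (E - (s + 3)) * aL)) := by
      refine (isUnit_or_dvd _).resolve_right fun h => ?_
      have h3 := (dvd_add_left (dvd_mul_right _ _)).1 h
      have h1 : (3 : ZLoc 3) ∣ ((1 : ℤ) : ZLoc 3) :=
        h3.trans (((hyu.mul hbu).dvd))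
      exact not_three_dvd_intCast (by decide) h1
    have hmem : (3 : ZLoc 3) ^ (s + 2) ∈ I := by
      rw [← Ideal.mul_unit_mem_iff_mem I hun]
      convert hL using 1
      rw [hvL, hE']
      ring
    exact I.mem_of_dvd (pow_dvd_pow _ hse) hmem
  -- If `3 ∣ y`, the determinant condition gives `3^E ∈ I`.
  · have hdu : IsUnit (((aM * bL - aL * bM : ℤ) : ZLoc 3)
        + 3 * (aM * (y * tL) - aL * (y' * tM))) := isUnit_intCast_add hdet3 _
    have hEI : (3 : ZLoc 3) ^ E ∈ I := by
      rw [← Ideal.mul_unit_mem_iff_mem I hdu]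
      have := I.sub_mem (I.mul_mem_left (bL + 3 * (y * tL)) hM)
        (I.mul_mem_left (bM + y * tM) hL)
      convert this using 1
      rw [hvL, hvM]
      push_cast
      linear_combination ((3 : ZLoc 3) ^ E * aL * tM) * hy'
    rcases hor with rfl | hor
    · exact hEI
    · refine I.mem_of_dvd hor ?_
      rw [← Ideal.mul_unit_mem_iff_mem I hu, ← Ideal.mul_unit_mem_iff_mem I hbu]
      have := I.sub_mem hL (I.mul_mem_right (aL : ZLoc 3) hEI)
      convert this using 1
      rw [hvL, hy]
      ring

/-! ### The residue classes of `k` modulo `9` -/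

/-- Congruences `2^a ≡ b` modulo `3^31 = 617673396283947`, read off in `ZMod`, where `2^a` is
computed by modular exponentiation. -/
lemma two_pow_dvd {a b : ℕ} (h : (2 : ZMod 617673396283947) ^ a = b) :
    (3 ^ 31 : ℤ) ∣ (2 ^ a - (b : ℤ)) := by
  have := (ZMod.intCast_zmod_eq_zero_iff_dvd (2 ^ a - (b : ℤ)) 617673396283947)
  norm_num at this ⊢
  rw [← this, h, sub_self]

/-- The exponent attached to the residue class `k ≡ 3` modulo `9` is `8`. -/
lemma exponent_eq_eight (n : ℤ) (e : ℕ)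
    (he : (e : ℕ∞) = min (7 + nuE 3 (3 * (3 * n - 1459))) 15) : e = 8 := by
  have h0 : 3 * n - 1459 ≠ 0 := by omega
  have hv : padicValInt 3 (3 * (3 * n - 1459)) = 1 := by
    rw [padicValInt.mul (by norm_num) h0,
      padicValInt.eq_zero_of_not_dvd (z := 3 * n - 1459) (by push_cast; omega)]
    simpa using padicValInt_self (p := 3)
  rw [nuE, if_neg (by omega), hv] at he
  have : (e : ℕ∞) = (8 : ℕ) := by rw [he]; rfl
  exact Nat.cast_injective this

/-- Davis' Theorem on `v₁⁻¹π_*(E₈;3)`: `Ψ₂` and `Ψ₃` preserve the lattice `ℤ_(3)⁸`;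
the quotient `C_m` vanishes for even `m`, and for `m = 2k+1` it is cyclic of order
`3^e` with `e` given by the residue of `k` mod 9. Via Bousfield's theorem, `C_{2k+1}`
is the Pontryagin dual of `v₁⁻¹π_{4k+2}(E₈;3)`. -/
theorem stmt14 (m : ℤ) :
    latt8.map ((psiLin 2).restrictScalars (ZLoc 3)) ≤ latt8 ∧
    latt8.map ((psiLin 3).restrictScalars (ZLoc 3)) ≤ latt8 ∧
    (Even m → Subsingleton (CE8 m)) ∧
    (∀ k : ℤ, m = 2 * k + 1 → ∀ e : ℕ,
      ((9 : ℤ) ∣ k → (e : ℕ∞) = min (7 + nuE 3 (k - 9 - 3 ^ 13)) 21) →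
      ((3 : ℤ) ∣ k - 1 → e = 6) →
      ((9 : ℤ) ∣ k - 2 → (e : ℕ∞) = min (9 + nuE 3 (k - 11)) 24) →
      (((9 : ℤ) ∣ k - 3 ∨ (9 : ℤ) ∣ k - 6) →
        (e : ℕ∞) = min (7 + nuE 3 (k - 6 - 2 * 3 ^ 7)) 15) →
      ((9 : ℤ) ∣ k - 5 → (e : ℕ∞) = min (10 + nuE 3 (k - 14)) 30) →
      ((9 : ℤ) ∣ k - 8 → (e : ℕ∞) = min (9 + nuE 3 (k - 8)) 18) →
      Nonempty (CE8 m ≃+ ZMod (3 ^ e))) := by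
  refine ⟨map_latt8_le mPsi2 psi2_single, map_latt8_le mPsi3 psi3_single, ?_, ?_⟩
  · rintro ⟨r, rfl⟩
    obtain ⟨u, -, hu⟩ := twoPow_congr (r + r) 0 1 1 r (by norm_num) (by push_cast; ring)
    obtain ⟨f⟩ := CE8_const (r + r) 1 3 (r * u) (by simpa using hu) 0 (by norm_num)
      (by decide +kernel) (by decide +kernel) (by decide +kernel)
    have : Subsingleton (ZMod (3 ^ 0)) := by
      rw [pow_zero]
      infer_instance
    exact f.toEquiv.subsingleton
  -- The constants passed to `CE8_min` are `a = 2c + 1`, a representative `x₀` of `2^a` modulo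
  -- `3^31`, the `s` and `E` of the formula, and the indices `L`, `M` of the two polynomials used.
  · intro k hm e h0 h1 h2 h36 h5 h8
    rcases (by omega : (3 : ℤ) ∣ k - 1 ∨ (9 : ℤ) ∣ k ∨ (9 : ℤ) ∣ k - 2 ∨ (9 : ℤ) ∣ k - 3 ∨
      (9 : ℤ) ∣ k - 5 ∨ (9 : ℤ) ∣ k - 6 ∨ (9 : ℤ) ∣ k - 8) with hk | hk | hk | hk | hk | hk | hk
    · obtain rfl := h1 hk
      obtain ⟨n, hn⟩ := hk
      obtain ⟨u, -, hu⟩ := twoPow_congr m 3 8 3 n (by norm_num) (by push_cast; omega)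
      exact CE8_const m 8 (3 * 3 * 8) (n * u) hu 6 (by norm_num)
        (by decide +kernel) (by decide +kernel) (by decide +kernel)
    · have he := h0 hk
      obtain ⟨n, hn⟩ : (9 : ℤ) ∣ k - 9 - 3 ^ 13 := by omega
      rw [hn] at he
      exact CE8_min m n 3188665 107597929428614 7 21 5 4
        (two_pow_dvd (b := 107597929428614) (by push_cast; reduce_mod_char))
        (by push_cast; omega) (by decide) (by norm_num) (by norm_num) (by decide +kernel) e he
    · have he := h2 hk
      obtain ⟨n, hn⟩ : (9 : ℤ) ∣ k - 11 := by omega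
      rw [hn] at he
      exact CE8_min m n 23 8388608 9 24 5 4 (by norm_num) (by push_cast; omega) (by decide)
        (by norm_num) (by norm_num) (by decide +kernel) e he
    · have he := h36 (.inl hk)
      obtain ⟨n, hn⟩ := hk
      rw [show k - 6 - 2 * 3 ^ 7 = 3 * (3 * n - 1459) by omega] at he
      obtain rfl := exponent_eq_eight n e he
      obtain ⟨u, -, hu⟩ := twoPow_congr m 7 128 9 n (by norm_num) (by push_cast; omega)
      exact CE8_const m 128 (3 * 9 * 128) (n * u) hu 8 (by norm_num)
        (by decide +kernel) (by decide +kernel) (by decide +kernel)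
    · have he := h5 hk
      obtain ⟨n, hn⟩ : (9 : ℤ) ∣ k - 14 := by omega
      rw [hn] at he
      exact CE8_min m n 29 536870912 10 30 4 5 (by norm_num) (by push_cast; omega) (by decide)
        (by norm_num) (by norm_num) (by decide +kernel) e he
    · have he := h36 (.inr hk)
      obtain ⟨n, hn⟩ : (9 : ℤ) ∣ k - 6 - 2 * 3 ^ 7 := by omega
      rw [hn] at he
      exact CE8_min m n 8761 54390929333789 7 15 5 4
        (two_pow_dvd (b := 54390929333789) (by push_cast; reduce_mod_char))
        (by push_cast; omega) (by decide) (by norm_num) (by norm_num) (by decide +kernel) e he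
    · have he := h8 hk
      obtain ⟨n, hn⟩ := hk
      rw [hn] at he
      exact CE8_min m n 17 131072 9 18 5 4 (by norm_num) (by push_cast; omega) (by decide)
        (by norm_num) (by norm_num) (by decide +kernel) e he

end
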